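/- arXiv:1904.02772 — 3 statements merged into one kernel-verified Lean document; each statement's English description precedes it below -/
import Mathlib

section
/- Let 𝒳, 𝒴 be finite-dimensional real Hilbert spaces, P : 𝒳 → 𝒴 continuous, Λ ⊆ 𝒴, and x̄ a point with P(x̄) ∈ Λ. Define G(x) := P(x) − Λ and the extended linearized cone 𝓛̃(x̄) := {(u, ξ) ∈ 𝒳 × 𝒴 : ξ ∈ DP(x̄)(u) ∩ T_Λ(P(x̄))}. If 𝓛̃(x̄) = {(0, 0)}, then DG(x̄|0)^{-1}(0) = {0}; that is, if 0 ∈ DG(x̄|0)(u) then u = 0. -/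
open Filter Topology RealInnerProductSpace Pointwise

noncomputable section

/-- The sequential tangent cone to `Ω` at `y`. -/
def tCone {E : Type*} [NormedAddCommGroup E] [NormedSpace ℝ E] (Ω : Set E) (y : E) : Set E :=
  {d | ∃ (t : ℕ → ℝ) (dk : ℕ → E), (∀ k, 0 < t k) ∧ Tendsto t atTop (𝓝 0) ∧
        Tendsto dk atTop (𝓝 d) ∧ ∀ k, y + t k • dk k ∈ Ω}

/-- The derivable cone to `Ω` at `y`. -/
def dCone {E : Type*} [NormedAddCommGroup E] [NormedSpace ℝ E] (Ω : Set E) (y : E) : Set E :=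
  {d | ∀ t : ℕ → ℝ, (∀ k, 0 < t k) → Tendsto t atTop (𝓝 0) →
        ∃ dk : ℕ → E, Tendsto dk atTop (𝓝 d) ∧ ∀ k, y + t k • dk k ∈ Ω}

/-- The Fréchet (regular) normal cone to `Ω` at `y`. -/
def nHat {E : Type*} [NormedAddCommGroup E] [InnerProductSpace ℝ E] (Ω : Set E) (y : E) :
    Set E :=
  {ζ | ∀ ε : ℝ, 0 < ε → ∃ δ : ℝ, 0 < δ ∧ ∀ z ∈ Ω, ‖z - y‖ < δ → ⟪ζ, z - y⟫ ≤ ε * ‖z - y‖}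

/-- The limiting (Mordukhovich) normal cone to `Ω` at `y`. -/
def nLim {E : Type*} [NormedAddCommGroup E] [InnerProductSpace ℝ E] (Ω : Set E) (y : E) :
    Set E :=
  {ζ | ∃ yk ζk : ℕ → E, (∀ k, yk k ∈ Ω) ∧ Tendsto yk atTop (𝓝 y) ∧
        Tendsto ζk atTop (𝓝 ζ) ∧ ∀ k, ζk k ∈ nHat Ω (yk k)}

/-- The directional limiting normal cone to `Ω` at `y` in direction `d`. -/
def nDir {E : Type*} [NormedAddCommGroup E] [InnerProductSpace ℝ E] (Ω : Set E) (y d : E) :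
    Set E :=
  {ζ | ∃ (t : ℕ → ℝ) (dk ζk : ℕ → E), (∀ k, 0 < t k) ∧ Tendsto t atTop (𝓝 0) ∧
        Tendsto dk atTop (𝓝 d) ∧ Tendsto ζk atTop (𝓝 ζ) ∧
        ∀ k, ζk k ∈ nHat Ω (y + t k • dk k)}

/-- The Fréchet (regular) normal cone on a product of two inner product spaces,
with the product (componentwise sum) inner product. -/
def nHatP {X Y : Type*} [NormedAddCommGroup X] [InnerProductSpace ℝ X]
    [NormedAddCommGroup Y] [InnerProductSpace ℝ Y] (Ω : Set (X × Y)) (p : X × Y) :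
    Set (X × Y) :=
  {ζ | ∀ ε : ℝ, 0 < ε → ∃ δ : ℝ, 0 < δ ∧ ∀ q ∈ Ω, ‖q - p‖ < δ →
        ⟪ζ.1, q.1 - p.1⟫ + ⟪ζ.2, q.2 - p.2⟫ ≤ ε * ‖q - p‖}

/-- The directional limiting normal cone on a product of two inner product spaces. -/
def nDirP {X Y : Type*} [NormedAddCommGroup X] [InnerProductSpace ℝ X]
    [NormedAddCommGroup Y] [InnerProductSpace ℝ Y] (Ω : Set (X × Y)) (p d : X × Y) :
    Set (X × Y) :=
  {ζ | ∃ (t : ℕ → ℝ) (dk ζk : ℕ → X × Y), (∀ k, 0 < t k) ∧ Tendsto t atTop (𝓝 0) ∧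
        Tendsto dk atTop (𝓝 d) ∧ Tendsto ζk atTop (𝓝 ζ) ∧
        ∀ k, ζk k ∈ nHatP Ω (p + t k • dk k)}

/-- The graphical derivative of a single-valued map `P` at `x` in direction `u`. -/
def gDeriv {X Y : Type*} [NormedAddCommGroup X] [NormedSpace ℝ X]
    [NormedAddCommGroup Y] [NormedSpace ℝ Y] (P : X → Y) (x u : X) : Set Y :=
  {ξ | ∃ (t : ℕ → ℝ) (uk : ℕ → X), (∀ k, 0 < t k) ∧ Tendsto t atTop (𝓝 0) ∧
        Tendsto uk atTop (𝓝 u) ∧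
        Tendsto (fun k => (t k)⁻¹ • (P (x + t k • uk k) - P x)) atTop (𝓝 ξ)}

/-- The graph of the set-valued map `G(x) = P(x) - Λ`. -/
def gphG {X Y : Type*} [Sub Y] (P : X → Y) (Λ : Set Y) : Set (X × Y) :=
  {p | ∃ s ∈ Λ, p.2 = P p.1 - s}

/-- The graph of the single-valued map `P`. -/
def gphP {X Y : Type*} (P : X → Y) : Set (X × Y) := {p | p.2 = P p.1}

/-- Metric subregularity of `G(x) = P(x) - Λ` at `(xbar, 0)`. -/
def metricSubreg {X Y : Type*} [NormedAddCommGroup X] [NormedAddCommGroup Y]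
    (P : X → Y) (Λ : Set Y) (xbar : X) : Prop :=
  ∃ κ : ℝ, 0 ≤ κ ∧ ∃ U ∈ 𝓝 xbar, ∀ x ∈ U,
    Metric.infDist x {x' | P x' ∈ Λ} ≤ κ * Metric.infDist (P x) Λ

/-- `Λ` is closed near the point `y`. -/
def closedNear {Y : Type*} [TopologicalSpace Y] (Λ : Set Y) (y : Y) : Prop :=
  ∃ V ∈ 𝓝 y, IsClosed (Λ ∩ V)

/-!
Let `(x + tₖ dₖ, tₖ wₖ)` realize a tangent direction `(u, v)` of the graph of `P - Λ`.
The increments `qₖ = P (x + tₖ dₖ) - P x` need not be `O(tₖ)`, so the steps are rescaled to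
`τₖ = ‖(tₖ, qₖ)‖`: then `τₖ⁻¹ (tₖ, qₖ)` has a unit cluster point `(a, ξ)`, and along that
subsequence `ξ ∈ DP(x)(a u)` and `ξ - a v ∈ T_Λ(P x)`. When `v = 0` and the linearized cone
is trivial, `ξ = 0` and `a u = 0`; since `(a, ξ)` is a unit vector, `a ≠ 0`, hence `u = 0`.
-/

theorem exists_subseq_tendsto_inv_norm_smul {E : Type*} [NormedAddCommGroup E] [NormedSpace ℝ E]
    [ProperSpace E] {p : ℕ → E} (hp : ∀ k, p k ≠ 0) :
    ∃ e : E, ‖e‖ = 1 ∧ ∃ φ : ℕ → ℕ, StrictMono φ ∧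
      Tendsto (fun k => ‖p (φ k)‖⁻¹ • p (φ k)) atTop (𝓝 e) := by
  have hsphere (k : ℕ) : ‖p k‖⁻¹ • p k ∈ Metric.sphere (0 : E) 1 :=
    mem_sphere_zero_iff_norm.2 (norm_smul_inv_norm (𝕜 := ℝ) (hp k))
  obtain ⟨e, he, φ, hφ, hlim⟩ := (isCompact_sphere (0 : E) 1).tendsto_subseq hsphere
  exact ⟨e, mem_sphere_zero_iff_norm.1 he, φ, hφ, hlim⟩

section

variable {X Y : Type*} [NormedAddCommGroup X] [NormedSpace ℝ X]
  [NormedAddCommGroup Y] [NormedSpace ℝ Y]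

theorem mem_tCone_of_tendsto_inv_smul {Ω : Set Y} {y d : Y} {τ : ℕ → ℝ} {z : ℕ → Y}
    (hτ : ∀ k, 0 < τ k) (hτ0 : Tendsto τ atTop (𝓝 0)) (hz : ∀ k, z k ∈ Ω)
    (hd : Tendsto (fun k => (τ k)⁻¹ • (z k - y)) atTop (𝓝 d)) : d ∈ tCone Ω y :=
  ⟨τ, fun k => (τ k)⁻¹ • (z k - y), hτ, hτ0, hd, fun k => by
    simpa only [smul_inv_smul₀ (hτ k).ne', add_sub_cancel] using hz k⟩

theorem mem_gDeriv_of_tendsto_inv_smul {P : X → Y} {x u : X} {ξ : Y} {τ : ℕ → ℝ} {z : ℕ → X}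
    (hτ : ∀ k, 0 < τ k) (hτ0 : Tendsto τ atTop (𝓝 0))
    (hu : Tendsto (fun k => (τ k)⁻¹ • (z k - x)) atTop (𝓝 u))
    (hξ : Tendsto (fun k => (τ k)⁻¹ • (P (z k) - P x)) atTop (𝓝 ξ)) : ξ ∈ gDeriv P x u :=
  ⟨τ, fun k => (τ k)⁻¹ • (z k - x), hτ, hτ0, hu, by
    simpa only [smul_inv_smul₀ (hτ _).ne', add_sub_cancel] using hξ⟩

theorem exists_mem_gDeriv_sub_smul_mem_tCone [FiniteDimensional ℝ Y] {P : X → Y} {Λ : Set Y}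
    {x u : X} {v : Y} (hP : ContinuousAt P x) (huv : (u, v) ∈ tCone (gphG P Λ) (x, 0)) :
    ∃ (a : ℝ) (ξ : Y), ‖(a, ξ)‖ = 1 ∧ ξ ∈ gDeriv P x (a • u) ∧ ξ - a • v ∈ tCone Λ (P x) := by
  obtain ⟨t, d, ht, ht0, hd, hmem⟩ := huv
  choose s hs hsd using hmem
  let z (k : ℕ) : X := x + t k • (d k).1
  let p (k : ℕ) : ℝ × Y := (t k, P (z k) - P x)
  have hz : Tendsto z atTop (𝓝 x) := by
    simpa using tendsto_const_nhds.add (ht0.smul hd.fst_nhds)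
  have hp0 : Tendsto p atTop (𝓝 0) := by
    have hinc : Tendsto (fun k => P (z k) - P x) atTop (𝓝 0) := by
      simpa using (hP.tendsto.comp hz).sub_const (P x)
    exact ht0.prodMk_nhds hinc
  have hp (k : ℕ) : p k ≠ 0 := fun h => (ht k).ne' (congrArg Prod.fst h)
  obtain ⟨⟨a, ξ⟩, hunit, φ, hφ, hlim⟩ := exists_subseq_tendsto_inv_norm_smul hp
  let τ (k : ℕ) : ℝ := ‖p (φ k)‖
  have hτ (k : ℕ) : 0 < τ k := norm_pos_iff.2 (hp (φ k))
  have hτ0 : Tendsto τ atTop (𝓝 0) := (tendsto_norm_zero.comp hp0).comp hφ.tendsto_atTop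
  have ha : Tendsto (fun k => (τ k)⁻¹ * t (φ k)) atTop (𝓝 a) := hlim.fst_nhds
  have hξ : Tendsto (fun k => (τ k)⁻¹ • (P (z (φ k)) - P x)) atTop (𝓝 ξ) := hlim.snd_nhds
  have hdφ := hd.comp hφ.tendsto_atTop
  refine ⟨a, ξ, hunit, mem_gDeriv_of_tendsto_inv_smul hτ hτ0 ?_ hξ,
    mem_tCone_of_tendsto_inv_smul hτ hτ0 (fun k => hs (φ k)) ?_⟩
  · simpa [z, smul_smul] using ha.smul hdφ.fst_nhds
  · refine (hξ.sub (ha.smul hdφ.snd_nhds)).congr fun k => ?_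
    have hs_eq : s (φ k) = P (z (φ k)) - t (φ k) • (d (φ k)).2 := by
      rw [eq_sub_iff_add_eq', ← eq_sub_iff_add_eq]
      simpa [z] using hsd (φ k)
    rw [hs_eq, Function.comp_apply, mul_smul, ← smul_sub, sub_right_comm]

/-- The extended linearized cone `𝓛̃(x)` of the constraint `P x ∈ Λ`: pairs `(u, ξ)` rather than
directions `u` alone, since `P` need not be differentiable and `DP(x)(u)` may be multivalued. -/
def extLinearizedCone (P : X → Y) (Λ : Set Y) (x : X) : Set (X × Y) :=
  {p | p.2 ∈ gDeriv P x p.1 ∩ tCone Λ (P x)}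

theorem statement2_general [FiniteDimensional ℝ Y] {P : X → Y} {Λ : Set Y} {x : X}
    (hP : ContinuousAt P x) (hL : extLinearizedCone P Λ x ⊆ {0}) {u : X}
    (hu : (u, (0 : Y)) ∈ tCone (gphG P Λ) (x, 0)) : u = 0 := by
  obtain ⟨a, ξ, hunit, hgDeriv, htCone⟩ := exists_mem_gDeriv_sub_smul_mem_tCone hP hu
  rw [smul_zero, sub_zero] at htCone
  obtain ⟨hau, rfl⟩ : a • u = 0 ∧ ξ = 0 :=
    Prod.mk_eq_zero.1 (hL (show (a • u, ξ) ∈ extLinearizedCone P Λ x from ⟨hgDeriv, htCone⟩))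
  have ha : a ≠ 0 := by
    rintro rfl
    simp at hunit
  exact (smul_eq_zero.1 hau).resolve_left ha

end

/-- Proposition 2.3. -/
theorem statement2 {X Y : Type*}
    [NormedAddCommGroup X] [InnerProductSpace ℝ X] [FiniteDimensional ℝ X]
    [NormedAddCommGroup Y] [InnerProductSpace ℝ Y] [FiniteDimensional ℝ Y]
    (P : X → Y) (Λ : Set Y) (xbar : X) (hP : Continuous P) (hfeas : P xbar ∈ Λ)
    (hL : {p : X × Y | p.2 ∈ gDeriv P xbar p.1 ∩ tCone Λ (P xbar)} = {(0, 0)}) :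
    ∀ u : X, ((u, (0 : Y)) : X × Y) ∈ tCone (gphG P Λ) (xbar, 0) → u = 0 :=
  fun _ hu => statement2_general hP.continuousAt hL.subset hu
end
end

section
/- Let 𝒳, 𝒴 be finite-dimensional real Hilbert spaces, P : 𝒳 → 𝒴 continuous, and Λ ⊆ 𝒴 closed near P(x̄), with P(x̄) ∈ Λ. If the extended linearized cone satisfies 𝓛̃(x̄) = {(0, 0)}, then G(x) := P(x) − Λ is strongly metrically subregular at (x̄, 0); that is, there exist κ ≥ 0 and a neighborhood U of x̄ such that ‖x − x̄‖ ≤ κ · dist(P(x), Λ) for all x ∈ U. -/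
open Filter Topology RealInnerProductSpace Pointwise

noncomputable section

/-!
Strong subregularity of `P(x) - Λ` says that the graph of `P` moves away from the cylinder `X × Λ`
at a linear rate around `(xbar, P xbar)`. In a proper space, a set `A` moves away from a set `B`
at a linear rate around `z` as soon as their tangent cones at `z` have no nonzero common
direction: otherwise there are `a n ∈ A` and `b n ∈ B` with `a n → z` and
`b n - a n = o(a n - z)`, and any cluster point of the unit vectors along `a n - z` is tangent to
both sets. The tangent cone to the graph is the graph of the graphical derivative, so for the graph
and the cylinder the common directions are exactly the extended linearized cone.
-/

section TangentCone

variable {E F : Type*} [NormedAddCommGroup E] [NormedSpace ℝ E]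
  [NormedAddCommGroup F] [NormedSpace ℝ F] {y d : E}

theorem nonempty_of_mem_tCone {Ω : Set E} (hd : d ∈ tCone Ω y) : Ω.Nonempty :=
  let ⟨_, _, _, _, _, hmem⟩ := hd
  ⟨_, hmem 0⟩

theorem mem_tCone_of_tendsto {Ω : Set E} {t : ℕ → ℝ} {b : ℕ → E} (ht : ∀ n, 0 < t n)
    (ht₀ : Tendsto t atTop (𝓝 0)) (hb : ∀ n, b n ∈ Ω)
    (hd : Tendsto (fun n => (t n)⁻¹ • (b n - y)) atTop (𝓝 d)) : d ∈ tCone Ω y := by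
  refine ⟨t, _, ht, ht₀, hd, fun n => ?_⟩
  rw [smul_inv_smul₀ (ht n).ne', add_sub_cancel]
  exact hb n

theorem map_mem_tCone (f : E →L[ℝ] F) {Ω : Set F} (hd : d ∈ tCone (f ⁻¹' Ω) y) :
    f d ∈ tCone Ω (f y) := by
  obtain ⟨t, dk, ht, ht₀, hdk, hmem⟩ := hd
  refine ⟨t, fun n => f (dk n), ht, ht₀, (f.continuous.tendsto d).comp hdk, fun n => ?_⟩
  simpa only [Set.mem_preimage, map_add, map_smul] using hmem n

theorem mem_tCone_gphP {P : E → F} {x : E} {p : E × F} :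
    p ∈ tCone (gphP P) (x, P x) ↔ p.2 ∈ gDeriv P x p.1 := by
  constructor
  · rintro ⟨t, dk, ht, ht₀, hdk, hmem⟩
    refine ⟨t, fun n => (dk n).1, ht, ht₀, hdk.fst_nhds, hdk.snd_nhds.congr fun n => ?_⟩
    have hgraph : P x + t n • (dk n).2 = P (x + t n • (dk n).1) := hmem n
    rw [← hgraph, add_sub_cancel_left, inv_smul_smul₀ (ht n).ne']
  · rintro ⟨t, uk, ht, ht₀, huk, hξ⟩
    refine mem_tCone_of_tendsto (b := fun n => (x + t n • uk n, P (x + t n • uk n))) ht ht₀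
      (fun _ => rfl) ((huk.prodMk_nhds hξ).congr fun n => ?_)
    simp only [Prod.mk_sub_mk, Prod.smul_mk, add_sub_cancel_left, inv_smul_smul₀ (ht n).ne']

end TangentCone

section LinearSeparation

open Asymptotics Metric

variable {E : Type*} [NormedAddCommGroup E] {A B : Set E} {z : E}

theorem exists_seq_of_not_isBigO_infDist (hB : B.Nonempty)
    (h : ¬ (fun a => a - z) =O[𝓝[A] z] fun a => infDist a B) :
    ∃ a b : ℕ → E, (∀ n, a n ∈ A) ∧ (∀ n, b n ∈ B) ∧ (∀ n, a n ≠ z) ∧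
      Tendsto a atTop (𝓝 z) ∧ (fun n => b n - a n) =o[atTop] fun n => a n - z := by
  have hfreq (n : ℕ) : ∃ᶠ a in 𝓝[A] z, (n + 1 : ℝ) * infDist a B < ‖a - z‖ := by
    simp only [isBigO_iff, not_exists, not_eventually, not_le,
      Real.norm_of_nonneg infDist_nonneg] at h
    exact h (n + 1)
  obtain ⟨U, hU⟩ := (𝓝[A] z).exists_antitone_basis
  have hex (n : ℕ) : ∃ a ∈ A, a ∈ U n ∧ ∃ b ∈ B, (n + 1 : ℝ) * ‖b - a‖ < ‖a - z‖ := by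
    obtain ⟨a, hlt, haA, haU⟩ :=
      ((hfreq n).and_eventually (inter_mem self_mem_nhdsWithin (hU.mem n))).exists
    have hn : (0 : ℝ) < n + 1 := by positivity
    rw [mul_comm, ← lt_div_iff₀ hn, infDist_lt_iff hB] at hlt
    obtain ⟨b, hbB, hab⟩ := hlt
    rw [dist_eq_norm', lt_div_iff₀ hn, mul_comm] at hab
    exact ⟨a, haA, haU, b, hbB, hab⟩
  choose a haA haU b hbB hlt using hex
  refine ⟨a, b, haA, hbB, fun n => ?_, (hU.tendsto haU).mono_right nhdsWithin_le_nhds, ?_⟩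
  · have : 0 < ‖a n - z‖ := lt_of_le_of_lt (by positivity) (hlt n)
    exact sub_ne_zero.1 (norm_pos_iff.1 this)
  · refine isLittleO_iff_nat_mul_le.2 fun m => (eventually_ge_atTop m).mono fun n hmn => ?_
    have hmn' : (m : ℝ) ≤ n + 1 := by exact_mod_cast hmn.trans n.le_succ
    exact (mul_le_mul_of_nonneg_right hmn' (norm_nonneg _)).trans (hlt n).le

variable [NormedSpace ℝ E] [ProperSpace E]

theorem exists_unit_mem_tCone_inter {a b : ℕ → E} (ha : ∀ n, a n ∈ A) (hb : ∀ n, b n ∈ B)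
    (hne : ∀ n, a n ≠ z) (hlim : Tendsto a atTop (𝓝 z))
    (hab : (fun n => b n - a n) =o[atTop] fun n => a n - z) :
    ∃ d ∈ tCone A z ∩ tCone B z, ‖d‖ = 1 := by
  have hpos (n : ℕ) : 0 < ‖a n - z‖ := norm_pos_iff.2 (sub_ne_zero.2 (hne n))
  have hunit (n : ℕ) : ‖a n - z‖⁻¹ • (a n - z) ∈ sphere (0 : E) 1 :=
    mem_sphere_zero_iff_norm.2 (norm_smul_inv_norm (𝕜 := ℝ) (sub_ne_zero.2 (hne n)))
  obtain ⟨d, hd, φ, hφ, had⟩ := (isCompact_sphere (0 : E) 1).tendsto_subseq hunit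
  have hgap : Tendsto (fun n => ‖a n - z‖⁻¹ • (b n - a n)) atTop (𝓝 0) :=
    hab.norm_right.tendsto_inv_smul_nhds_zero
  have hbd : Tendsto (fun n => ‖a (φ n) - z‖⁻¹ • (b (φ n) - z)) atTop (𝓝 d) := by
    simpa only [Function.comp_def, ← smul_add, sub_add_sub_cancel, zero_add]
      using (hgap.comp hφ.tendsto_atTop).add had
  have hstep : Tendsto (fun n => ‖a (φ n) - z‖) atTop (𝓝 0) :=
    (tendsto_iff_norm_sub_tendsto_zero.1 hlim).comp hφ.tendsto_atTop
  exact ⟨d, ⟨mem_tCone_of_tendsto (fun n => hpos (φ n)) hstep (fun n => ha (φ n)) had,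
    mem_tCone_of_tendsto (fun n => hpos (φ n)) hstep (fun n => hb (φ n)) hbd⟩,
    mem_sphere_zero_iff_norm.1 hd⟩

theorem isBigO_infDist_of_tCone_inter_subset (hB : B.Nonempty)
    (h : tCone A z ∩ tCone B z ⊆ {0}) :
    (fun a => a - z) =O[𝓝[A] z] fun a => infDist a B := by
  by_contra hO
  obtain ⟨a, b, ha, hb, hne, hlim, hab⟩ := exists_seq_of_not_isBigO_infDist hB hO
  obtain ⟨d, hd, hd₁⟩ := exists_unit_mem_tCone_inter ha hb hne hlim hab
  exact one_ne_zero (hd₁.symm.trans (norm_eq_zero.2 (h hd)))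

end LinearSeparation

theorem infDist_univ_prod {X Y : Type*} [PseudoMetricSpace X] [PseudoMetricSpace Y]
    (p : X × Y) (Λ : Set Y) :
    Metric.infDist p (Set.univ ×ˢ Λ) = Metric.infDist p.2 Λ := by
  rw [Metric.infDist, Metric.infEDist_prod, Metric.infEDist_zero_of_mem (Set.mem_univ p.1),
    max_eq_right zero_le, Metric.infDist]

theorem statement3_general {X Y : Type*}
    [NormedAddCommGroup X] [NormedSpace ℝ X] [ProperSpace X]
    [NormedAddCommGroup Y] [NormedSpace ℝ Y] [ProperSpace Y]
    (P : X → Y) (Λ : Set Y) (xbar : X) (hP : ContinuousAt P xbar)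
    (hL : {p : X × Y | p.2 ∈ gDeriv P xbar p.1 ∩ tCone Λ (P xbar)} = {(0, 0)}) :
    ∃ κ : ℝ, 0 ≤ κ ∧ ∃ U ∈ 𝓝 xbar, ∀ x ∈ U, ‖x - xbar‖ ≤ κ * Metric.infDist (P x) Λ := by
  have hΛ : Λ.Nonempty := nonempty_of_mem_tCone (hL.ge (Set.mem_singleton _)).2
  have hcones : tCone (gphP P) (xbar, P xbar) ∩ tCone (Set.univ ×ˢ Λ) (xbar, P xbar) ⊆ {0} := by
    rintro p ⟨hgraph, hcyl⟩
    rw [Set.univ_prod] at hcyl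
    exact hL.le ⟨mem_tCone_gphP.1 hgraph, map_mem_tCone (ContinuousLinearMap.snd ℝ X Y) hcyl⟩
  obtain ⟨κ, hκ, hbound⟩ :=
    (isBigO_infDist_of_tCone_inter_subset (Set.univ_nonempty.prod hΛ) hcones).exists_nonneg
  have hgraph : Tendsto (fun x => (x, P x)) (𝓝 xbar) (𝓝[gphP P] (xbar, P xbar)) :=
    tendsto_nhdsWithin_iff.2 ⟨continuousAt_id.prodMk hP, .of_forall fun _ => rfl⟩
  refine ⟨κ, hκ, _, hgraph.eventually hbound.bound, fun x hx => ?_⟩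
  calc ‖x - xbar‖ ≤ ‖(x, P x) - (xbar, P xbar)‖ := norm_fst_le ((x, P x) - (xbar, P xbar))
    _ ≤ κ * ‖Metric.infDist (x, P x) (Set.univ ×ˢ Λ)‖ := hx
    _ = κ * Metric.infDist (P x) Λ := by
      rw [Real.norm_of_nonneg Metric.infDist_nonneg, infDist_univ_prod]

/-- Proposition 2.4: strong metric subregularity. -/
theorem statement3 {X Y : Type*}
    [NormedAddCommGroup X] [InnerProductSpace ℝ X] [FiniteDimensional ℝ X]
    [NormedAddCommGroup Y] [InnerProductSpace ℝ Y] [FiniteDimensional ℝ Y]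
    (P : X → Y) (Λ : Set Y) (xbar : X) (hP : Continuous P)
    (hΛ : closedNear Λ (P xbar)) (hfeas : P xbar ∈ Λ)
    (hL : {p : X × Y | p.2 ∈ gDeriv P xbar p.1 ∩ tCone Λ (P xbar)} = {(0, 0)}) :
    ∃ κ : ℝ, 0 ≤ κ ∧ ∃ U ∈ 𝓝 xbar, ∀ x ∈ U, ‖x - xbar‖ ≤ κ * Metric.infDist (P x) Λ :=
  statement3_general P Λ xbar hP.continuousAt hL
end
end

section
/- Let 𝒳, 𝒴 be finite-dimensional real Hilbert spaces, P : 𝒳 → 𝒴 a single-valued map, Λ ⊆ 𝒴, and G(x) := P(x) − Λ. Let x ∈ 𝒳, s ∈ Λ, and y := P(x) − s. If (x*, −y*) ∈ N̂_{gph G}(x, y), then x* ∈ D̂*P(x)(y*) (i.e., (x*, −y*) ∈ N̂_{gph P}(x, P(x))) and y* ∈ N̂_Λ(P(x) − y) = N̂_Λ(s). -/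
open Filter Topology RealInnerProductSpace Pointwise

noncomputable section

/-! Regular normals to a set restrict to regular normals of any smaller set through the point.
The graph of `G` contains two isometric copies: the translate of `gph P` by `(0, -s)`, and the
fibre over `x`, which is the image of `Λ` under the point reflection `z ↦ P x - z`. The
reflection is what turns `-y*` into `y*`. -/

section Graph

variable {X Y : Type*} [AddCommGroup Y] {P : X → Y} {Λ : Set Y}

theorem mem_gphG_iff {p : X × Y} : p ∈ gphG P Λ ↔ P p.1 - p.2 ∈ Λ := by
  constructor
  · rintro ⟨s, hs, hp⟩
    rwa [hp, sub_sub_cancel]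
  · exact fun hp => ⟨_, hp, (sub_sub_cancel _ _).symm⟩

theorem gphP_subset_preimage_add_gphG [AddZeroClass X] {s : Y} (hs : s ∈ Λ) :
    gphP P ⊆ (· + (0, -s)) ⁻¹' gphG P Λ := by
  rintro ⟨x, y⟩ (rfl : y = P x)
  simpa [mem_gphG_iff] using hs

theorem preimage_mk_gphG (x : X) : Prod.mk x ⁻¹' gphG P Λ = (P x - ·) ⁻¹' Λ :=
  Set.ext fun _ => mem_gphG_iff

end Graph

section RegularNormalCone

variable {X Y : Type*} [NormedAddCommGroup X] [InnerProductSpace ℝ X]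
  [NormedAddCommGroup Y] [InnerProductSpace ℝ Y]

theorem nHatP_anti {Ω₁ Ω₂ : Set (X × Y)} (h : Ω₁ ⊆ Ω₂) (p : X × Y) :
    nHatP Ω₂ p ⊆ nHatP Ω₁ p := fun _ hζ ε hε =>
  let ⟨δ, hδ, hle⟩ := hζ ε hε
  ⟨δ, hδ, fun q hq => hle q (h hq)⟩

theorem nHatP_preimage_add_right (Ω : Set (X × Y)) (v p : X × Y) :
    nHatP ((· + v) ⁻¹' Ω) p = nHatP Ω (p + v) := by
  ext ζ
  simp only [nHatP, Set.mem_ofPred_eq, (add_right_surjective v).forall (p := fun q => q ∈ Ω → _),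
    Set.mem_preimage, ← Prod.fst_sub, ← Prod.snd_sub, add_sub_add_right_eq_sub]

theorem mem_nHat_preimage_const_sub_iff {Λ : Set Y} {a y ζ : Y} :
    ζ ∈ nHat ((a - ·) ⁻¹' Λ) y ↔ -ζ ∈ nHat Λ (a - y) := by
  have inner_reflect (z : Y) : ⟪-ζ, a - z - (a - y)⟫ = ⟪ζ, z - y⟫ := by
    rw [sub_sub_sub_cancel_left, ← neg_sub z y, inner_neg_neg]
  have norm_reflect (z : Y) : ‖a - z - (a - y)‖ = ‖z - y‖ := by
    rw [sub_sub_sub_cancel_left, norm_sub_rev]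
  simp only [nHat, Set.mem_ofPred_eq,
    (Equiv.subLeft a).surjective.forall (p := fun z => z ∈ Λ → _), Equiv.subLeft_apply,
    Set.mem_preimage, inner_reflect, norm_reflect]

theorem snd_mem_nHat_of_mem_nHatP {Ω : Set (X × Y)} {x : X} {y : Y} {ζ : X × Y}
    (hζ : ζ ∈ nHatP Ω (x, y)) : ζ.2 ∈ nHat (Prod.mk x ⁻¹' Ω) y := by
  intro ε hε
  obtain ⟨δ, hδ, hle⟩ := hζ ε hε
  have norm_fiber (z : Y) : ‖(x, z) - (x, y)‖ = ‖z - y‖ := by simp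
  refine ⟨δ, hδ, fun z hz hzy => ?_⟩
  simpa only [norm_fiber, sub_self, inner_zero_right, zero_add] using
    hle (x, z) hz ((norm_fiber z).trans_lt hzy)

end RegularNormalCone

theorem statement4_general {X Y : Type*}
    [NormedAddCommGroup X] [InnerProductSpace ℝ X]
    [NormedAddCommGroup Y] [InnerProductSpace ℝ Y]
    (P : X → Y) (Λ : Set Y) (x : X) (s : Y) (hs : s ∈ Λ) (y : Y) (hy : y = P x - s)
    (xs : X) (ys : Y)
    (h : ((xs, -ys) : X × Y) ∈ nHatP (gphG P Λ) (x, y)) :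
    ((xs, -ys) : X × Y) ∈ nHatP (gphP P) (x, P x) ∧ ys ∈ nHat Λ (P x - y) := by
  constructor
  · have translate : (x, P x) + (0, -s) = (x, y) := by simp [hy, sub_eq_add_neg]
    apply nHatP_anti (gphP_subset_preimage_add_gphG hs)
    rwa [nHatP_preimage_add_right, translate]
  · have fiber : -ys ∈ nHat ((P x - ·) ⁻¹' Λ) y :=
      preimage_mk_gphG (P := P) x ▸ snd_mem_nHat_of_mem_nHatP h
    simpa only [neg_neg] using mem_nHat_preimage_const_sub_iff.mp fiber

/-- Lemma 3.2. -/
theorem statement4 {X Y : Type*}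
    [NormedAddCommGroup X] [InnerProductSpace ℝ X] [FiniteDimensional ℝ X]
    [NormedAddCommGroup Y] [InnerProductSpace ℝ Y] [FiniteDimensional ℝ Y]
    (P : X → Y) (Λ : Set Y) (x : X) (s : Y) (hs : s ∈ Λ) (y : Y) (hy : y = P x - s)
    (xs : X) (ys : Y)
    (h : ((xs, -ys) : X × Y) ∈ nHatP (gphG P Λ) (x, y)) :
    ((xs, -ys) : X × Y) ∈ nHatP (gphP P) (x, P x) ∧ ys ∈ nHat Λ (P x - y) :=
  statement4_general P Λ x s hs y hy xs ys h
end
end
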